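/- Let (K_{i(e)}, w_e, p_e)_{e∈E} be a contractive Markov system with average contracting rate a ∈ (0,1) on a metric space in which every set of finite diameter is relatively compact, with K_1,…,K_N nonempty open sets, each p_e|_{K_{i(e)}} uniformly continuous and bounded below by some δ > 0. Suppose the system has an invariant Borel probability measure μ such that C := ∑_{i=1}^N ∫_{K_i} d(x, x_i) dμ(x) < ∞ for the fixed points x_i ∈ K_i, and suppose M(Y) = 1, where M is the associated generalized Markov measure. Then for every e ∈ E, E_M(1_{{σ : σ_1 = e}} | 𝓕) = p_e ∘ F M-almost everywhere, where F is the coding map and 𝓕 is the σ-algebra generated by the coordinates σ_j, j ≤ 0. -/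

import Mathlib

open MeasureTheory Filter Topology
open scoped ENNReal

/-- A contractive Markov system (CMS) on a metric space `K`, with vertex set `Fin N`
and (finite) edge set `E`. -/
structure CMS (K : Type*) [MetricSpace K] [MeasurableSpace K]
    (N : ℕ) (E : Type*) [Fintype E] where
  ι : E → Fin N
  τ : E → Fin N
  Ks : Fin N → Set K
  Ks_nonempty : ∀ i, (Ks i).Nonempty
  Ks_meas : ∀ i, MeasurableSet (Ks i)
  Ks_disj : ∀ i j, i ≠ j → Disjoint (Ks i) (Ks j)
  Ks_cover : (⋃ i, Ks i) = Set.univ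
  w : E → K → K
  w_meas : ∀ e, Measurable (w e)
  w_maps : ∀ e, Set.MapsTo (w e) (Ks (ι e)) (Ks (τ e))
  p : E → K → ℝ
  p_meas : ∀ e, Measurable (p e)
  p_nonneg : ∀ e x, 0 ≤ p e x
  p_sum_one : ∀ x, ∑ e, p e x = 1
  p_zero : ∀ e x, x ∉ Ks (ι e) → p e x = 0
  a : ℝ
  a_pos : 0 < a
  a_lt_one : a < 1
  contractive : ∀ i, ∀ x ∈ Ks i, ∀ y ∈ Ks i,
    ∑ e, p e x * dist (w e x) (w e y) ≤ a * dist x y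

namespace CMS

variable {K : Type*} [MetricSpace K] [MeasurableSpace K]
  {N : ℕ} {E : Type*} [Fintype E]

/-- The Markov operator `U` acting on functions. -/
noncomputable def Ufun (S : CMS K N E) (f : K → ℝ) : K → ℝ :=
  fun x => ∑ e, S.p e x * f (S.w e x)

/-- The adjoint Markov operator `U*` acting on measures. -/
noncomputable def adjoint (S : CMS K N E) (ν : Measure K) : Measure K :=
  ν.bind fun x => ∑ e, ENNReal.ofReal (S.p e x) • Measure.dirac (S.w e x)

/-- The weight `p_{e₁}(x) p_{e₂}(w_{e₁} x) ⋯` of a cylinder `[e₁, …, e_k]` started at `x`. -/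
noncomputable def cylWeight (S : CMS K N E) : K → List E → ℝ
  | _, [] => 1
  | x, e :: es => S.p e x * S.cylWeight (S.w e x) es

/-- `M` is the generalized Markov measure associated with the CMS and invariant measure `μ`. -/
def IsGMarkovMeasure [MeasurableSpace E] (S : CMS K N E)
    (μ : Measure K) (M : Measure (ℤ → E)) : Prop :=
  IsProbabilityMeasure M ∧
  ∀ (m : ℤ) (es : List E),
    M {σ | ∀ j : Fin es.length, σ (m + (j : ℕ)) = es.get j} =
      ENNReal.ofReal (∫ x, S.cylWeight x es ∂μ)

/-- `comp S σ n = w_{σ 0} ∘ w_{σ (-1)} ∘ ⋯ ∘ w_{σ (-n)}`. -/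
noncomputable def comp (S : CMS K N E) (σ : ℤ → E) : ℕ → K → K
  | 0, x => S.w (σ 0) x
  | n + 1, x => S.comp σ n (S.w (σ (-((n : ℤ) + 1))) x)

/-- `codeSeq S xs σ n = w_{σ 0} ∘ ⋯ ∘ w_{σ (-n)} (x_{i(σ (-n))})`. -/
noncomputable def codeSeq (S : CMS K N E) (xs : Fin N → K) (σ : ℤ → E) (n : ℕ) : K :=
  S.comp σ n (xs (S.ι (σ (-(n : ℤ)))))

end CMS

/-- The left shift `S` on `Σ = E^ℤ`. -/
def shiftL (E : Type*) : (ℤ → E) → ℤ → E := fun σ j => σ (j + 1)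

/-- The `n`-fold left shift `S^n` on `Σ = E^ℤ`, `n ∈ ℤ`. -/
def shiftZ (E : Type*) (n : ℤ) : (ℤ → E) → ℤ → E := fun σ j => σ (j + n)

namespace CMS

variable {K : Type*} [MetricSpace K] [MeasurableSpace K]
  {N : ℕ} {E : Type*} [Fintype E]

/-- The subshift `Σ_G` of (two-sided) paths of the directed multigraph. -/
def SigmaG (S : CMS K N E) : Set (ℤ → E) :=
  {σ | ∀ j : ℤ, S.τ (σ j) = S.ι (σ (j + 1))}

/-- The set `D` of paths where the coding limit exists. -/
def Dset (S : CMS K N E) (xs : Fin N → K) : Set (ℤ → E) :=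
  {σ ∈ S.SigmaG | ∃ L : K, Tendsto (S.codeSeq xs σ) atTop (nhds L)}

/-- `Y = ⋂_{n ∈ ℤ} S^n(D)`. -/
def Yset (S : CMS K N E) (xs : Fin N → K) : Set (ℤ → E) :=
  ⋂ n : ℤ, shiftZ E n '' S.Dset xs

/-- The coding map `F`. -/
noncomputable def F [Nonempty K] (S : CMS K N E) (xs : Fin N → K) (σ : ℤ → E) : K :=
  limUnder atTop (S.codeSeq xs σ)

end CMS

/-- The modulus of uniform continuity of `f` on the set `A`. -/
noncomputable def modulusOn {K : Type*} [MetricSpace K] (f : K → ℝ) (A : Set K) (t : ℝ) : ℝ :=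
  sSup {s | ∃ x ∈ A, ∃ y ∈ A, dist x y ≤ t ∧ s = |f x - f y|}

/-- Dini-continuity of `f` on `A`: `∫_0^c φ(t)/t dt < ∞` for some `c > 0`. -/
def DiniOn {K : Type*} [MetricSpace K] (f : K → ℝ) (A : Set K) : Prop :=
  ∃ c > 0, ∫⁻ t in Set.Ioc (0 : ℝ) c, ENNReal.ofReal (modulusOn f A t / t) < ⊤

/-- Entropy of the partition of `Σ = E^ℤ` into cylinders `[e₀, …, e_{n-1}]₀`. -/
noncomputable def cylEnt {E : Type*} [Fintype E] [MeasurableSpace E]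
    (Λ : Measure (ℤ → E)) (n : ℕ) : ℝ :=
  ∑ es : Fin n → E, Real.negMulLog ((Λ {σ | ∀ j : Fin n, σ ((j : ℕ) : ℤ) = es j}).toReal)

/-- Kolmogorov–Sinai entropy of the left shift with respect to an invariant measure,
via the generating zero-time partition. -/
noncomputable def KSEntropy {E : Type*} [Fintype E] [MeasurableSpace E]
    (Λ : Measure (ℤ → E)) : ℝ :=
  ⨅ n : ℕ, cylEnt Λ (n + 1) / ((n : ℝ) + 1)

def ShiftInvariant {E : Type*} [MeasurableSpace E] (Λ : Measure (ℤ → E)) : Prop :=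
  Measure.map (shiftL E) Λ = Λ

/-- `∫⁻ (-u) dΘ` for an extended-real valued energy function `u ≤ 0`. -/
noncomputable def negPartInt {α : Type*} [MeasurableSpace α]
    (u : α → EReal) (Θ : Measure α) : ℝ≥0∞ :=
  ∫⁻ x, (if u x = ⊥ then (⊤ : ℝ≥0∞) else ENNReal.ofReal (-(u x).toReal)) ∂Θ

/-- The free energy `h_Θ(S) + Θ(u)`, as an extended real number. -/
noncomputable def freeEnergy {E : Type*} [Fintype E] [MeasurableSpace E]
    (u : (ℤ → E) → EReal) (Θ : Measure (ℤ → E)) : EReal :=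
  (KSEntropy Θ : EReal) - ((negPartInt u Θ : ℝ≥0∞) : EReal)

/-- The pressure `P(u) = sup_Θ (h_Θ(S) + Θ(u))` over shift-invariant probability measures. -/
noncomputable def pressure {E : Type*} [Fintype E] [MeasurableSpace E]
    (u : (ℤ → E) → EReal) : EReal :=
  ⨆ (Θ : Measure (ℤ → E)) (_ : IsProbabilityMeasure Θ ∧ ShiftInvariant Θ), freeEnergy u Θ

/-- `Λ` is an equilibrium state for the energy function `u`. -/
def IsEquilibrium {E : Type*} [Fintype E] [MeasurableSpace E]
    (u : (ℤ → E) → EReal) (Λ : Measure (ℤ → E)) : Prop :=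
  IsProbabilityMeasure Λ ∧ ShiftInvariant Λ ∧ freeEnergy u Λ = pressure u

/-- Extended-real logarithm, `elog x = ⊥` for `x ≤ 0`. -/
noncomputable def elog (x : ℝ) : EReal :=
  if x ≤ 0 then (⊥ : EReal) else ((Real.log x : ℝ) : EReal)

/-- The σ-algebra `𝓕` on `E^ℤ` generated by the coordinates `σ_j`, `j ≤ 0`. -/
def pastAlg (E : Type*) [MeasurableSpace E] : MeasurableSpace (ℤ → E) :=
  MeasurableSpace.comap (fun (σ : ℤ → E) (j : {j : ℤ // j ≤ 0}) => σ j.1) inferInstance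

/-- `g_Λ(σ) = g_{Λ σ₁}(σ)` where `g_{Λ e} = E_Λ(1_{{σ₁ = e}} | 𝓕)`. -/
noncomputable def gfun {E : Type*} [Fintype E] [MeasurableSpace E]
    (Λ : Measure (ℤ → E)) (σ : ℤ → E) : ℝ :=
  (Λ[Set.indicator {τ : ℤ → E | τ 1 = σ 1} (fun _ => (1 : ℝ)) | pastAlg E]) σ

/-!
Started at `x ∈ K_i`, a random word of length `n + 1` moves `x` and `x_i` to points at mean distance
at most `a ^ (n + 1) * d(x, x_i)`. Uniform continuity of `p_e` on the cell `K_{i(e)}` then makes the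
mean difference between `p_e` at the endpoint of the word and `p_e` at its code point, the
`codingError`, tend to `0`; being at most `1`, it also tends to `0` in `μ`-mean. This mean bounds
`∫_s (1_{σ₁ = e} - p_e (codeSeq n)) dM` for every event `s` of the block `σ_{-n}, …, σ_0`, so
`1_{σ₁ = e}` and the limit `p_e ∘ F` have the same integrals over all events of finite past blocks,
and Lévy's upward theorem passes to the whole past.

The σ-algebra on the finite alphabet `E` is arbitrary, but the formula defining `M` gives the events
`σ_j = e`, `e ∈ E`, total mass `1`; this forces `{σ_j}` to be measurable almost surely, so that
functions of a block of letters are almost everywhere measurable.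
-/

section MeasurableAtoms

variable {Ω α : Type*} [MeasurableSpace α]

lemma measure_le_of_subset_biUnion_measurableAtom {μ : Measure α} {s t : Set α}
    (h : t ⊆ ⋃ x ∈ s, measurableAtom x) : μ t ≤ μ s := by
  rw [← measure_toMeasurable s]
  exact measure_mono <| h.trans <| Set.iUnion₂_subset fun _ hx =>
    measurableAtom_subset (measurableSet_toMeasurable μ s) (subset_toMeasurable μ s hx)

lemma update_mem_measurableAtom {ι : Type*} [DecidableEq ι] (σ : ι → α) {j : ι} {a : α}
    (ha : a ∈ measurableAtom (σ j)) : Function.update σ j a ∈ measurableAtom σ := by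
  refine Set.mem_iInter.mpr fun s => Set.mem_iInter₂.mpr fun hσ hs => ?_
  exact mem_of_mem_measurableAtom ha (measurable_update σ hs)
    (by rwa [Set.mem_preimage, Function.update_eq_self])

lemma measure_coord_mem_measurableAtom {ι : Type*} (μ : Measure (ι → α)) (j : ι) (a : α) :
    μ {σ | σ j ∈ measurableAtom a} = μ {σ | σ j = a} := by
  classical
  refine le_antisymm (measure_le_of_subset_biUnion_measurableAtom fun σ hσ => ?_)
    (measure_mono fun σ hσ => hσ ▸ mem_measurableAtom_self (σ j))
  have hmem := update_mem_measurableAtom (Function.update σ j a) (j := j) (a := σ j)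
    (by rw [Function.update_self]; exact hσ)
  rw [Function.update_idem, Function.update_eq_self] at hmem
  exact Set.mem_biUnion (Function.update_self j a σ) hmem

lemma measurableSet_of_forall_measurableSet_singleton [Countable α] {s : Set α}
    (hs : ∀ a ∈ s, MeasurableSet {a}) : MeasurableSet s := by
  rw [← Set.biUnion_of_singleton s]
  exact .biUnion s.to_countable hs

variable {m m₀ : MeasurableSpace Ω} {μ : Measure[m₀] Ω} {X : Ω → α}

/- If `b ≠ a` lies in the atom of `a`, then the events `X ∈ atom c` with `c ≠ a` already cover
`Ω`, which leaves no mass for the event `X ∈ atom a`. -/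
lemma ae_measurableSet_singleton_of_sum_measure_atom_le [Fintype α] [IsFiniteMeasure μ]
    (h : ∑ a, μ {ω | X ω ∈ measurableAtom a} ≤ μ Set.univ) :
    ∀ᵐ ω ∂μ, MeasurableSet {X ω} := by
  classical
  have hnull (a : α) (ha : ¬MeasurableSet {a}) : μ {ω | X ω = a} = 0 := by
    obtain ⟨b, hb, hba⟩ : ∃ b ∈ measurableAtom a, b ≠ a := by
      by_contra! hatom
      refine ha ?_
      have heq : measurableAtom a = {a} :=
        Set.Subset.antisymm hatom (Set.singleton_subset_iff.mpr (mem_measurableAtom_self a))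
      exact heq ▸ .measurableAtom_of_countable a
    have hcover : Set.univ ⊆ ⋃ c ∈ Finset.univ.erase a, {ω | X ω ∈ measurableAtom c} := by
      intro ω _
      by_cases hω : X ω = a
      · refine Set.mem_biUnion (Finset.mem_coe.mpr (Finset.mem_erase.mpr ⟨hba, Finset.mem_univ b⟩))
          ?_
        rw [Set.mem_ofPred_eq, measurableAtom_eq_of_mem hb, hω]
        exact mem_measurableAtom_self a
      · exact Set.mem_biUnion (Finset.mem_coe.mpr (Finset.mem_erase.mpr ⟨hω, Finset.mem_univ _⟩))
          (mem_measurableAtom_self (X ω))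
    have hle : μ {ω | X ω ∈ measurableAtom a} + μ Set.univ ≤ 0 + μ Set.univ := by
      rw [zero_add]
      refine le_trans ?_ h
      rw [← Finset.add_sum_erase _ _ (Finset.mem_univ a)]
      gcongr
      exact (measure_mono hcover).trans (measure_biUnion_finset_le _ _)
    refine measure_mono_null (fun ω hω => ?_)
      (nonpos_iff_eq_zero.mp ((ENNReal.add_le_add_iff_right (measure_ne_top μ _)).mp hle))
    exact hω ▸ mem_measurableAtom_self (X ω)
  have hae : ∀ᵐ ω ∂μ, ∀ a, ¬MeasurableSet {a} → X ω ≠ a :=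
    ae_all_iff.mpr fun a => by
      by_cases ha : MeasurableSet {a}
      · exact .of_forall fun _ h => absurd ha h
      · filter_upwards [measure_eq_zero_iff_ae_notMem.mp (hnull a ha)] with ω hω _ using hω
  filter_upwards [hae] with ω hω
  exact not_not.mp fun h => hω _ h rfl

lemma aestronglyMeasurable_comp_of_ae_measurableSet_singleton [Finite α] {β : Type*}
    [TopologicalSpace β] (hX : Measurable[m] X) (hs : ∀ᵐ ω ∂μ, MeasurableSet {X ω})
    (g : α → β) : AEStronglyMeasurable[m] (fun ω => g (X ω)) μ := by
  classical
  rcases isEmpty_or_nonempty Ω with hΩ | ⟨⟨ω₀⟩⟩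
  · exact .of_subsingleton_dom
  let G : Set α := {a | MeasurableSet {a}}
  let g' : α → β := G.piecewise g fun _ => g (X ω₀)
  have hG : MeasurableSet G := measurableSet_of_forall_measurableSet_singleton fun _ ha => ha
  have hfiber (b : β) : MeasurableSet (g' ⁻¹' {b}) := by
    rw [Set.piecewise_preimage, Set.ite]
    exact (measurableSet_of_forall_measurableSet_singleton fun _ ha => ha.2).union
      ((MeasurableSet.const _).diff hG)
  let φ : SimpleFunc α β := ⟨g', hfiber, Set.toFinite _⟩
  refine ⟨fun ω => φ (X ω), φ.stronglyMeasurable.comp_measurable hX, ?_⟩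
  filter_upwards [hs] with ω hω
  exact (Set.piecewise_eq_of_mem G g (fun _ => g (X ω₀)) hω).symm

lemma nullMeasurableSet_fiber_of_ae_measurableSet_singleton (hX : Measurable X)
    (hs : ∀ᵐ ω ∂μ, MeasurableSet {X ω}) (a : α) : NullMeasurableSet {ω | X ω = a} μ := by
  by_cases ha : MeasurableSet {a}
  · exact (hX ha).nullMeasurableSet
  · refine .of_null (measure_mono_null (fun ω hω => ?_) (ae_iff.mp hs))
    rwa [Set.mem_ofPred_eq, show X ω = a from hω]

lemma integral_comp_eq_sum_of_ae_measurableSet_singleton [Fintype α] [IsFiniteMeasure μ]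
    (hX : Measurable X) (hs : ∀ᵐ ω ∂μ, MeasurableSet {X ω}) (g : α → ℝ) :
    ∫ ω, g (X ω) ∂μ = ∑ a, μ.real {ω | X ω = a} * g a := by
  classical
  have hnull := nullMeasurableSet_fiber_of_ae_measurableSet_singleton hX hs
  have hg (ω : Ω) : g (X ω) = ∑ a, {ω | X ω = a}.indicator (fun _ => g a) ω := by
    simp only [Set.indicator_apply, Set.mem_ofPred_eq, Finset.sum_ite_eq, Finset.mem_univ, if_true]
  simp only [hg]
  rw [integral_finsetSum _ fun a _ => (integrable_const (g a)).indicator₀ (hnull a)]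
  refine Finset.sum_congr rfl fun a _ => ?_
  rw [integral_indicator₀ (hnull a), setIntegral_const, smul_eq_mul]

end MeasurableAtoms

section Limits

variable {Ω β : Type*} {m₀ : MeasurableSpace Ω} {μ : Measure Ω} [TopologicalSpace β]

lemma nullMeasurableSet_exists_tendsto [TopologicalSpace.IsCompletelyPseudoMetrizableSpace β]
    {f : ℕ → Ω → β} (hf : ∀ n, AEStronglyMeasurable (f n) μ) :
    NullMeasurableSet {ω | ∃ L, Tendsto (f · ω) atTop (𝓝 L)} μ := by
  refine (StronglyMeasurable.measurableSet_exists_tendsto (l := atTop)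
    fun n => (hf n).stronglyMeasurable_mk).nullMeasurableSet.congr ?_
  filter_upwards [ae_all_iff.mpr fun n => (hf n).ae_eq_mk] with ω hω
  exact congrArg (fun u : ℕ → β => ∃ L, Tendsto u atTop (𝓝 L)) (funext fun n => (hω n).symm)

lemma aestronglyMeasurable_subalgebra_of_tendsto_ae [Nonempty β]
    [TopologicalSpace.IsCompletelyMetrizableSpace β] {m : MeasurableSpace Ω}
    {f : ℕ → Ω → β} {g : Ω → β}
    (hf : ∀ n, AEStronglyMeasurable[m] (f n) μ)
    (hlim : ∀ᵐ ω ∂μ, Tendsto (f · ω) atTop (𝓝 (g ω))) : AEStronglyMeasurable[m] g μ := by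
  refine ⟨_, StronglyMeasurable.limUnder (l := atTop) fun n => (hf n).stronglyMeasurable_mk, ?_⟩
  filter_upwards [ae_all_iff.mpr fun n => (hf n).ae_eq_mk, hlim] with ω hω hωlim
  exact (hωlim.congr hω).limUnder_eq.symm

lemma condExp_iSup_ae_eq_of_forall_setIntegral_eq [IsFiniteMeasure μ] {ℱ : Filtration ℕ m₀}
    {f g : Ω → ℝ} (hf : Integrable f μ) (hg : Integrable g μ)
    (h : ∀ n s, MeasurableSet[ℱ n] s → ∫ ω in s, f ω ∂μ = ∫ ω in s, g ω ∂μ) :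
    μ[f | ⨆ n, ℱ n] =ᵐ[μ] μ[g | ⨆ n, ℱ n] := by
  have hn (n : ℕ) : μ[f | ℱ n] =ᵐ[μ] μ[g | ℱ n] :=
    ae_eq_condExp_of_forall_setIntegral_eq (ℱ.le n) hg
      (fun _ _ _ => integrable_condExp.integrableOn)
      (fun s hs _ => (setIntegral_condExp (ℱ.le n) hf hs).trans (h n s hs))
      stronglyMeasurable_condExp.aestronglyMeasurable
  filter_upwards [tendsto_ae_condExp f, tendsto_ae_condExp g, ae_all_iff.mpr hn]
    with ω hfω hgω hω
  exact tendsto_nhds_unique (hfω.congr hω) hgω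

end Limits

lemma exists_abs_sub_le_add_mul_dist_of_uniformContinuousOn {X : Type*} [PseudoMetricSpace X]
    {f : X → ℝ} {A : Set X} (hf : UniformContinuousOn f A)
    (hbdd : ∀ x ∈ A, ∀ y ∈ A, |f x - f y| ≤ 1) {ε : ℝ} (hε : 0 < ε) :
    ∃ C, 0 ≤ C ∧ ∀ x ∈ A, ∀ y ∈ A, |f x - f y| ≤ ε + C * dist x y := by
  obtain ⟨η, hη, h⟩ := Metric.uniformContinuousOn_iff.mp hf ε hε
  refine ⟨η⁻¹, by positivity, fun x hx y hy => ?_⟩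
  rcases lt_or_ge (dist x y) η with hd | hd
  · have hfε : |f x - f y| < ε := h x hx y hy hd
    have : 0 ≤ η⁻¹ * dist x y := by positivity
    linarith
  · have : 1 ≤ η⁻¹ * dist x y := by rwa [inv_mul_eq_div, one_le_div hη]
    linarith [hbdd x hx y hy]

section Words

variable {E : Type*}

/-- The block `σ_m, …, σ_{m+k-1}` of the two-sided sequence `σ`. -/
def word (m : ℤ) (k : ℕ) (σ : ℤ → E) : Fin k → E := fun j => σ (m + (j : ℕ))

/-- The block `σ_{-n}, …, σ_0`, which generates the `n`-th approximation of `pastAlg`. -/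
def pastWord (n : ℕ) : (ℤ → E) → Fin (n + 1) → E := word (-(n : ℤ)) (n + 1)

lemma init_word (m : ℤ) (k : ℕ) (σ : ℤ → E) : Fin.init (word m (k + 1) σ) = word m k σ := rfl

lemma tail_word (m : ℤ) (k : ℕ) (σ : ℤ → E) :
    Fin.tail (word m (k + 1) σ) = word (m + 1) k σ := by
  funext j
  simp only [Fin.tail, word, Fin.val_succ, Nat.cast_add, Nat.cast_one]
  congr 1
  ring

variable [MeasurableSpace E]

@[fun_prop]
lemma measurable_word (m : ℤ) (k : ℕ) : Measurable (word (E := E) m k) :=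
  measurable_pi_lambda _ fun _ => measurable_pi_apply _

/-- The filtration `σ(σ_{-n}, …, σ_0)`, `n ∈ ℕ`, exhausting the past `pastAlg`. -/
def pastFiltration (E : Type*) [MeasurableSpace E] :
    Filtration ℕ (MeasurableSpace.pi : MeasurableSpace (ℤ → E)) where
  seq n := MeasurableSpace.comap (pastWord n) inferInstance
  mono' := monotone_nat_of_le_succ fun n => by
    have htail : pastWord n = Fin.tail ∘ pastWord (E := E) (n + 1) := by
      funext σ
      rw [Function.comp_apply, pastWord, pastWord, tail_word]
      congr 1
      push_cast
      ring
    have hmeas : Measurable (Fin.tail : (Fin (n + 1 + 1) → E) → _) :=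
      measurable_pi_lambda _ fun _ => measurable_pi_apply _
    rw [htail, ← MeasurableSpace.comap_comp]
    exact MeasurableSpace.comap_mono hmeas.comap_le
  le' n := (measurable_word _ _).comap_le

lemma pastAlg_le : pastAlg E ≤ MeasurableSpace.pi :=
  Measurable.comap_le <| measurable_pi_lambda _ fun _ => measurable_pi_apply _

lemma measurable_pastAlg_coord {j : ℤ} (hj : j ≤ 0) :
    Measurable[pastAlg E] fun σ : ℤ → E => σ j :=
  (measurable_pi_apply (⟨j, hj⟩ : {j : ℤ // j ≤ 0})).comp
    (comap_measurable fun (σ : ℤ → E) (j : {j : ℤ // j ≤ 0}) => σ j.1)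

lemma measurable_pastAlg_pastWord (n : ℕ) : Measurable[pastAlg E] (pastWord (E := E) n) :=
  @measurable_pi_lambda _ _ _ (pastAlg E) _ _ fun j => measurable_pastAlg_coord (by omega)

lemma iSup_pastFiltration : ⨆ n, pastFiltration E n = pastAlg E := by
  refine le_antisymm (iSup_le fun n => (measurable_pastAlg_pastWord n).comap_le) ?_
  refine Measurable.comap_le (@measurable_pi_lambda _ _ _ (⨆ n, pastFiltration E n) _ _ ?_)
  rintro ⟨j, hj⟩
  have hcoord : (fun σ : ℤ → E => σ j) = (fun v => v 0) ∘ pastWord j.natAbs := by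
    funext σ
    simp only [Function.comp_apply, pastWord, word, Fin.val_zero]
    congr 1
    omega
  rw [hcoord]
  exact ((measurable_pi_apply 0).comp (comap_measurable _)).mono
    (le_iSup (fun n => (pastFiltration E n : MeasurableSpace (ℤ → E))) _) le_rfl

end Words

namespace CMS

variable {K : Type*} [MetricSpace K] [MeasurableSpace K]
  {N : ℕ} {E : Type*} [Fintype E] (S : CMS K N E)

/-- Two points lie in the same member of the partition `K_1, …, K_N`; contraction on average is
only available for such pairs. -/
def SameCell (x y : K) : Prop := ∃ i, x ∈ S.Ks i ∧ y ∈ S.Ks i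

/-- The map `w_{e_k} ∘ ⋯ ∘ w_{e_1}` of the word `[e_1, …, e_k]`. -/
def wordMap (es : List E) (x : K) : K := es.foldl (fun y e => S.w e y) x

/-- The value `w_{e_n} ∘ ⋯ ∘ w_{e_0} (x_{i(e_0)})` of the coding sequence on the past
`(e_0, …, e_n)`, listed from the most remote letter on. -/
def codePoint (xs : Fin N → K) {n : ℕ} (es : Fin (n + 1) → E) : K :=
  S.wordMap (List.ofFn es) (xs (S.ι (es 0)))

/-- The mean deviation, over the words of length `n + 1` issued from `x`, between `p_e` at the
endpoint of the word and `p_e` at its code point. -/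
noncomputable def codingError (xs : Fin N → K) (e : E) (n : ℕ) (x : K) : ℝ :=
  ∑ es : Fin (n + 1) → E, S.cylWeight x (List.ofFn es) *
    |S.p e (S.wordMap (List.ofFn es) x) - S.p e (S.codePoint xs es)|

variable {S}

lemma exists_mem_Ks (x : K) : ∃ i, x ∈ S.Ks i :=
  Set.mem_iUnion.mp (S.Ks_cover ▸ Set.mem_univ x)

lemma eq_of_mem_Ks {i j : Fin N} {x : K} (hi : x ∈ S.Ks i) (hj : x ∈ S.Ks j) : i = j :=
  not_not.mp fun h => Set.disjoint_left.mp (S.Ks_disj i j h) hi hj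

lemma mem_Ks_of_p_ne_zero {e : E} {x : K} (h : S.p e x ≠ 0) : x ∈ S.Ks (S.ι e) :=
  not_not.mp fun hx => h (S.p_zero e x hx)

lemma p_mem_Icc (e : E) (x : K) : S.p e x ∈ Set.Icc (0 : ℝ) 1 :=
  ⟨S.p_nonneg e x, S.p_sum_one x ▸ Finset.single_le_sum (f := (S.p · x))
    (fun e' _ => S.p_nonneg e' x) (Finset.mem_univ e)⟩

lemma norm_p_le_one (e : E) (x : K) : ‖S.p e x‖ ≤ 1 := by
  rw [Real.norm_of_nonneg (S.p_nonneg e x)]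
  exact (p_mem_Icc e x).2

lemma abs_p_sub_p_le_one (e : E) (x y : K) : |S.p e x - S.p e y| ≤ 1 := by
  simpa only [Real.dist_eq, sub_zero] using Real.dist_le_of_mem_Icc (p_mem_Icc e x) (p_mem_Icc e y)

lemma continuous_p (hOpen : ∀ i, IsOpen (S.Ks i)) {e : E}
    (hp : ContinuousOn (S.p e) (S.Ks (S.ι e))) : Continuous (S.p e) := by
  refine continuous_iff_continuousAt.mpr fun x => ?_
  obtain ⟨i, hi⟩ := exists_mem_Ks (S := S) x
  by_cases h : i = S.ι e
  · subst h
    exact hp.continuousAt ((hOpen _).mem_nhds hi)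
  · refine continuousAt_const.congr (f := fun _ => 0) ?_
    filter_upwards [(hOpen i).mem_nhds hi] with y hy
    exact (S.p_zero e y fun h' => h (eq_of_mem_Ks hy h')).symm

namespace SameCell

variable {x y : K}

lemma mem_Ks (h : S.SameCell x y) {i : Fin N} (hx : x ∈ S.Ks i) : y ∈ S.Ks i := by
  obtain ⟨j, hxj, hyj⟩ := h
  exact eq_of_mem_Ks hxj hx ▸ hyj

lemma w (h : S.SameCell x y) {e : E} (he : S.p e x ≠ 0) : S.SameCell (S.w e x) (S.w e y) :=
  have hx := mem_Ks_of_p_ne_zero he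
  ⟨S.τ e, S.w_maps e hx, S.w_maps e (h.mem_Ks hx)⟩

lemma wordMap {es : List E} (h : S.SameCell x y) (hes : S.cylWeight x es ≠ 0) :
    S.SameCell (S.wordMap es x) (S.wordMap es y) := by
  induction es generalizing x y with
  | nil => exact h
  | cons e es ih => exact ih (h.w (left_ne_zero_of_mul hes)) (right_ne_zero_of_mul hes)

lemma exists_abs_p_sub_p_le {e : E} (hUC : UniformContinuousOn (S.p e) (S.Ks (S.ι e)))
    {ε : ℝ} (hε : 0 < ε) :
    ∃ C, 0 ≤ C ∧ ∀ x y, S.SameCell x y → |S.p e x - S.p e y| ≤ ε + C * dist x y := by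
  obtain ⟨C, hC, h⟩ := exists_abs_sub_le_add_mul_dist_of_uniformContinuousOn hUC
    (fun x _ y _ => abs_p_sub_p_le_one e x y) hε
  refine ⟨C, hC, fun x y ⟨i, hx, hy⟩ => ?_⟩
  by_cases hi : i = S.ι e
  · exact h x (hi ▸ hx) y (hi ▸ hy)
  · rw [S.p_zero e x fun hx' => hi (eq_of_mem_Ks hx hx'),
      S.p_zero e y fun hy' => hi (eq_of_mem_Ks hy hy'), sub_zero, abs_zero]
    positivity

end SameCell

section Weights

lemma cylWeight_nonneg (x : K) (es : List E) : 0 ≤ S.cylWeight x es := by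
  induction es generalizing x with
  | nil => exact zero_le_one
  | cons e es ih => exact mul_nonneg (S.p_nonneg e x) (ih _)

lemma cylWeight_append_singleton (x : K) (es : List E) (e : E) :
    S.cylWeight x (es ++ [e]) = S.cylWeight x es * S.p e (S.wordMap es x) := by
  induction es generalizing x with
  | nil => simp only [List.nil_append, cylWeight, wordMap, List.foldl_nil, mul_one, one_mul]
  | cons a es ih =>
    rw [List.cons_append, cylWeight, ih, cylWeight, mul_assoc]
    rfl

@[fun_prop]
lemma measurable_cylWeight (es : List E) : Measurable fun x => S.cylWeight x es := by
  induction es with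
  | nil => exact measurable_const
  | cons e es ih => exact (S.p_meas e).mul (ih.comp (S.w_meas e))

@[fun_prop]
lemma measurable_wordMap (es : List E) : Measurable (S.wordMap es) := by
  induction es with
  | nil => exact measurable_id
  | cons e es ih => exact ih.comp (S.w_meas e)

lemma sum_cylWeight_cons (k : ℕ) (x : K) (f : (Fin (k + 1) → E) → ℝ) :
    ∑ es, S.cylWeight x (List.ofFn es) * f es =
      ∑ e, S.p e x * ∑ es : Fin k → E,
        S.cylWeight (S.w e x) (List.ofFn es) * f (Fin.cons e es) := by
  rw [← (Fin.consEquiv fun _ => E).sum_comp, Fintype.sum_prod_type]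
  simp only [Fin.consEquiv, Equiv.coe_fn_mk, List.ofFn_cons, cylWeight, Finset.mul_sum, mul_assoc]

lemma sum_cylWeight_snoc (k : ℕ) (x : K) (f : (Fin (k + 1) → E) → ℝ) :
    ∑ es, S.cylWeight x (List.ofFn es) * f es =
      ∑ es : Fin k → E, S.cylWeight x (List.ofFn es) *
        ∑ e, S.p e (S.wordMap (List.ofFn es) x) * f (Fin.snoc es e) := by
  rw [← (Fin.snocEquiv fun _ => E).sum_comp, Fintype.sum_prod_type_right]
  simp only [Fin.snocEquiv, Equiv.coe_fn_mk, List.ofFn_succ', Fin.snoc_castSucc, Fin.snoc_last,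
    List.concat_eq_append, cylWeight_append_singleton, Finset.mul_sum, mul_assoc]

lemma sum_cylWeight (k : ℕ) (x : K) :
    ∑ es : Fin k → E, S.cylWeight x (List.ofFn es) = 1 := by
  induction k generalizing x with
  | zero => simp only [Finset.univ_unique, List.ofFn_zero, cylWeight, Finset.sum_const,
      Finset.card_singleton, one_smul]
  | succ k ih =>
    simpa only [mul_one, ih, S.p_sum_one] using sum_cylWeight_cons (S := S) k x fun _ => 1

lemma cylWeight_le_one {k : ℕ} (x : K) (es : Fin k → E) : S.cylWeight x (List.ofFn es) ≤ 1 :=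
  sum_cylWeight (S := S) k x ▸ Finset.single_le_sum
    (f := fun es : Fin k → E => S.cylWeight x (List.ofFn es))
    (fun _ _ => cylWeight_nonneg x _) (Finset.mem_univ es)

lemma integrable_cylWeight (μ : Measure K) [IsFiniteMeasure μ] {k : ℕ} (es : Fin k → E) :
    Integrable (fun x => S.cylWeight x (List.ofFn es)) μ := by
  refine .of_bound (measurable_cylWeight _).aestronglyMeasurable 1 (.of_forall fun x => ?_)
  rw [Real.norm_of_nonneg (cylWeight_nonneg x _)]
  exact cylWeight_le_one x es

lemma SameCell.sum_cylWeight_mul_dist_le {x y : K} (h : S.SameCell x y) (k : ℕ) :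
    ∑ es : Fin k → E, S.cylWeight x (List.ofFn es) *
      dist (S.wordMap (List.ofFn es) x) (S.wordMap (List.ofFn es) y) ≤ S.a ^ k * dist x y := by
  induction k generalizing x y with
  | zero => simp [cylWeight, CMS.wordMap]
  | succ k ih =>
    obtain ⟨i, hx, hy⟩ := id h
    rw [sum_cylWeight_cons (f := fun es =>
      dist (S.wordMap (List.ofFn es) x) (S.wordMap (List.ofFn es) y))]
    simp only [List.ofFn_cons]
    calc _ ≤ ∑ e, S.p e x * (S.a ^ k * dist (S.w e x) (S.w e y)) := by
          refine Finset.sum_le_sum fun e _ => ?_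
          rcases eq_or_ne (S.p e x) 0 with he | he
          · simp only [he, zero_mul, le_refl]
          · exact mul_le_mul_of_nonneg_left (ih (h.w he)) (S.p_nonneg e x)
      _ = S.a ^ k * ∑ e, S.p e x * dist (S.w e x) (S.w e y) := by
          simp only [Finset.mul_sum, mul_left_comm]
      _ ≤ S.a ^ k * (S.a * dist x y) :=
          mul_le_mul_of_nonneg_left (S.contractive i x hx y hy) (pow_nonneg S.a_pos.le k)
      _ = S.a ^ (k + 1) * dist x y := by ring

end Weights

section CodingError

variable {xs : Fin N → K}

lemma comp_eq_wordMap_pastWord (σ : ℤ → E) (n : ℕ) (x : K) :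
    S.comp σ n x = S.wordMap (List.ofFn (pastWord n σ)) x := by
  induction n generalizing x with
  | zero => simp [comp, pastWord, word, wordMap]
  | succ n ih =>
    rw [comp, ih, ← Fin.cons_self_tail (pastWord (n + 1) σ), List.ofFn_cons]
    simp only [pastWord, tail_word]
    simp [wordMap, word]

lemma codeSeq_eq_codePoint (xs : Fin N → K) (σ : ℤ → E) (n : ℕ) :
    S.codeSeq xs σ n = S.codePoint xs (pastWord n σ) := by
  rw [codeSeq, comp_eq_wordMap_pastWord, codePoint]
  simp only [pastWord, word, Fin.val_zero, Nat.cast_zero, add_zero]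

lemma codePoint_of_cylWeight_ne_zero {n : ℕ} {es : Fin (n + 1) → E} {x : K} {i : Fin N}
    (hx : x ∈ S.Ks i) (hes : S.cylWeight x (List.ofFn es) ≠ 0) :
    S.codePoint xs es = S.wordMap (List.ofFn es) (xs i) := by
  rw [List.ofFn_succ] at hes
  rw [codePoint, eq_of_mem_Ks hx (mem_Ks_of_p_ne_zero (left_ne_zero_of_mul hes))]

lemma codingError_nonneg (e : E) (n : ℕ) (x : K) : 0 ≤ S.codingError xs e n x :=
  Finset.sum_nonneg fun _ _ => mul_nonneg (cylWeight_nonneg x _) (abs_nonneg _)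

lemma codingError_le_one (e : E) (n : ℕ) (x : K) : S.codingError xs e n x ≤ 1 :=
  sum_cylWeight (S := S) (n + 1) x ▸ Finset.sum_le_sum fun _ _ =>
    mul_le_of_le_one_right (cylWeight_nonneg x _) (abs_p_sub_p_le_one e _ _)

@[fun_prop]
lemma measurable_codingError (xs : Fin N → K) (e : E) (n : ℕ) :
    Measurable (S.codingError xs e n) :=
  Finset.measurable_fun_sum _ fun _ _ => (measurable_cylWeight _).mul
    (((S.p_meas e).comp (measurable_wordMap _)).sub_const _).abs

lemma norm_codingError_le_one (e : E) (n : ℕ) (x : K) : ‖S.codingError xs e n x‖ ≤ 1 := by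
  rw [Real.norm_of_nonneg (codingError_nonneg e n x)]
  exact codingError_le_one e n x

lemma integrable_codingError (μ : Measure K) [IsFiniteMeasure μ] (e : E) (n : ℕ) :
    Integrable (S.codingError xs e n) μ :=
  .of_bound (by fun_prop) 1 (.of_forall (norm_codingError_le_one e n))

lemma codingError_le {e : E} {ε C : ℝ} (hC : 0 ≤ C)
    (hp : ∀ x y, S.SameCell x y → |S.p e x - S.p e y| ≤ ε + C * dist x y)
    {i : Fin N} {x : K} (hx : x ∈ S.Ks i) (hxs : xs i ∈ S.Ks i) (n : ℕ) :
    S.codingError xs e n x ≤ ε + C * (S.a ^ (n + 1) * dist x (xs i)) := by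
  have hcell : S.SameCell x (xs i) := ⟨i, hx, hxs⟩
  calc S.codingError xs e n x
      ≤ ∑ es : Fin (n + 1) → E, S.cylWeight x (List.ofFn es) *
          (ε + C * dist (S.wordMap (List.ofFn es) x) (S.wordMap (List.ofFn es) (xs i))) := by
        refine Finset.sum_le_sum fun es _ => ?_
        rcases eq_or_ne (S.cylWeight x (List.ofFn es)) 0 with h0 | h0
        · simp only [h0, zero_mul, le_refl]
        · rw [codePoint_of_cylWeight_ne_zero hx h0]
          exact mul_le_mul_of_nonneg_left (hp _ _ (hcell.wordMap h0)) (cylWeight_nonneg x _)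
    _ = ε + C * ∑ es : Fin (n + 1) → E, S.cylWeight x (List.ofFn es) *
          dist (S.wordMap (List.ofFn es) x) (S.wordMap (List.ofFn es) (xs i)) := by
        simp only [mul_add, Finset.sum_add_distrib, ← Finset.sum_mul, sum_cylWeight, one_mul,
          Finset.mul_sum, mul_left_comm]
    _ ≤ ε + C * (S.a ^ (n + 1) * dist x (xs i)) := by
        gcongr
        exact hcell.sum_cylWeight_mul_dist_le (n + 1)

lemma tendsto_codingError {e : E} (hUC : UniformContinuousOn (S.p e) (S.Ks (S.ι e)))
    (hxs : ∀ i, xs i ∈ S.Ks i) (x : K) :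
    Tendsto (S.codingError xs e · x) atTop (𝓝 0) := by
  obtain ⟨i, hx⟩ := exists_mem_Ks (S := S) x
  refine tendsto_order.mpr ⟨fun b hb => .of_forall fun n => hb.trans_le (codingError_nonneg e n x),
    fun ε hε => ?_⟩
  obtain ⟨C, hC, hp⟩ := SameCell.exists_abs_p_sub_p_le hUC (half_pos hε)
  have hpow : Tendsto (fun n : ℕ => ε / 2 + C * (S.a ^ (n + 1) * dist x (xs i))) atTop
      (𝓝 (ε / 2 + C * (0 * dist x (xs i)))) :=
    ((((tendsto_pow_atTop_nhds_zero_of_lt_one S.a_pos.le S.a_lt_one).comp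
      (tendsto_add_atTop_nat 1)).mul_const _).const_mul C).const_add _
  filter_upwards [hpow.eventually_lt_const (u := ε) (by linarith)] with n hn
  exact (codingError_le hC hp hx (hxs i) n).trans_lt hn

lemma tendsto_integral_codingError (μ : Measure K) [IsFiniteMeasure μ] {e : E}
    (hUC : UniformContinuousOn (S.p e) (S.Ks (S.ι e))) (hxs : ∀ i, xs i ∈ S.Ks i) :
    Tendsto (fun n => ∫ x, S.codingError xs e n x ∂μ) atTop (𝓝 0) := by
  simpa only [integral_zero] using tendsto_integral_of_dominated_convergence (fun _ => (1 : ℝ))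
    (fun n => (measurable_codingError xs e n).aestronglyMeasurable) (integrable_const 1)
    (fun n => .of_forall (norm_codingError_le_one e n))
    (.of_forall (tendsto_codingError hUC hxs))

end CodingError

namespace IsGMarkovMeasure

variable [MeasurableSpace E] {μ : Measure K} {M : Measure (ℤ → E)}

lemma measure_word_eq (hM : S.IsGMarkovMeasure μ M) (m : ℤ) {k : ℕ} (es : Fin k → E) :
    M {σ | word m k σ = es} = ENNReal.ofReal (∫ x, S.cylWeight x (List.ofFn es) ∂μ) := by
  rw [← hM.2 m]
  congr 1
  ext σ
  simp only [Set.mem_ofPred_eq, funext_iff, word, List.get_ofFn]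
  exact (finCongr (List.length_ofFn (f := es))).symm.forall_congr fun {j} => .rfl

variable [IsProbabilityMeasure μ]

lemma sum_measure_coord_eq (hM : S.IsGMarkovMeasure μ M) (j : ℤ) :
    ∑ e, M {σ | σ j = e} = 1 := by
  have hcyl (e : E) : M {σ | σ j = e} = ENNReal.ofReal (∫ x, S.p e x ∂μ) := by
    simpa [word, funext_iff, cylWeight] using hM.measure_word_eq j (k := 1) fun _ => e
  have h_int (e : E) : Integrable (S.p e) μ :=
    .of_bound (S.p_meas e).aestronglyMeasurable 1 (.of_forall (norm_p_le_one e))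
  simp only [hcyl]
  rw [← ENNReal.ofReal_sum_of_nonneg fun e _ => integral_nonneg (S.p_nonneg e),
    ← integral_finsetSum _ fun e _ => h_int e]
  simp only [S.p_sum_one, integral_const, probReal_univ, one_smul, ENNReal.ofReal_one]

lemma ae_measurableSet_singleton_coord (hM : S.IsGMarkovMeasure μ M) (j : ℤ) :
    ∀ᵐ σ ∂M, MeasurableSet {σ j} := by
  have := hM.1
  refine ae_measurableSet_singleton_of_sum_measure_atom_le (X := fun σ : ℤ → E => σ j) ?_
  simp only [measure_coord_mem_measurableAtom, hM.sum_measure_coord_eq, measure_univ, le_refl]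

lemma ae_measurableSet_singleton_word (hM : S.IsGMarkovMeasure μ M) (m : ℤ) (k : ℕ) :
    ∀ᵐ σ ∂M, MeasurableSet {word m k σ} := by
  filter_upwards [ae_all_iff.mpr hM.ae_measurableSet_singleton_coord] with σ hσ
  rw [← Set.univ_pi_singleton]
  exact .univ_pi fun j => hσ _

lemma integral_word (hM : S.IsGMarkovMeasure μ M) (m : ℤ) {k : ℕ} (g : (Fin k → E) → ℝ) :
    ∫ σ, g (word m k σ) ∂M = ∫ x, ∑ es, S.cylWeight x (List.ofFn es) * g es ∂μ := by
  have := hM.1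
  rw [integral_comp_eq_sum_of_ae_measurableSet_singleton (measurable_word m k)
    (hM.ae_measurableSet_singleton_word m k),
    integral_finsetSum _ fun es _ => (integrable_cylWeight μ es).mul_const _]
  refine Finset.sum_congr rfl fun es _ => ?_
  rw [integral_mul_const, Measure.real, hM.measure_word_eq,
    ENNReal.toReal_ofReal (integral_nonneg fun x => cylWeight_nonneg x _)]

lemma integral_pastWord_next (hM : S.IsGMarkovMeasure μ M) (n : ℕ)
    (H : (Fin (n + 1) → E) → E → ℝ) :
    ∫ σ, H (pastWord n σ) (σ 1) ∂M =
      ∫ x, ∑ es, S.cylWeight x (List.ofFn es) *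
        ∑ e, S.p e (S.wordMap (List.ofFn es) x) * H es e ∂μ := by
  have hnext (σ : ℤ → E) : word (-(n : ℤ)) (n + 1 + 1) σ (Fin.last _) = σ 1 := by
    simp [word]
  have h := hM.integral_word (-(n : ℤ)) fun v : Fin (n + 1 + 1) → E =>
    H (Fin.init v) (v (Fin.last _))
  simp only [init_word, hnext] at h
  refine h.trans (integral_congr_ae (.of_forall fun x => (sum_cylWeight_snoc ..).trans ?_))
  simp only [Fin.init_snoc, Fin.snoc_last]

lemma aestronglyMeasurable_codeSeq_comp {β : Type*} [TopologicalSpace β]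
    (hM : S.IsGMarkovMeasure μ M) (xs : Fin N → K) (f : K → β) (n : ℕ) :
    AEStronglyMeasurable[pastAlg E] (fun σ => f (S.codeSeq xs σ n)) M := by
  simp only [codeSeq_eq_codePoint]
  exact aestronglyMeasurable_comp_of_ae_measurableSet_singleton (measurable_pastAlg_pastWord n)
    (hM.ae_measurableSet_singleton_word _ _) fun es => f (S.codePoint xs es)

lemma integrable_p_codeSeq (hM : S.IsGMarkovMeasure μ M) (xs : Fin N → K) (e : E) (n : ℕ) :
    Integrable (fun σ => S.p e (S.codeSeq xs σ n)) M :=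
  have := hM.1
  .of_bound ((hM.aestronglyMeasurable_codeSeq_comp xs (S.p e) n).mono pastAlg_le) 1
    (.of_forall fun _ => norm_p_le_one e _)

lemma integrable_indicator_next (hM : S.IsGMarkovMeasure μ M) (e : E) :
    Integrable ({σ : ℤ → E | σ 1 = e}.indicator fun _ => (1 : ℝ)) M :=
  have := hM.1
  (integrable_const 1).indicator₀ <| nullMeasurableSet_fiber_of_ae_measurableSet_singleton
    (measurable_pi_apply 1) (hM.ae_measurableSet_singleton_coord 1) e

lemma abs_setIntegral_indicator_sub_le (hM : S.IsGMarkovMeasure μ M) (xs : Fin N → K) (e : E)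
    {n : ℕ} {s : Set (ℤ → E)} (hs : MeasurableSet[pastFiltration E n] s) :
    |∫ σ in s, ({σ : ℤ → E | σ 1 = e}.indicator (fun _ => (1 : ℝ)) σ
      - S.p e (S.codeSeq xs σ n)) ∂M| ≤ ∫ x, S.codingError xs e n x ∂μ := by
  classical
  rw [← integral_indicator ((pastFiltration E).le n s hs)]
  obtain ⟨T, -, rfl⟩ := hs
  let H (es : Fin (n + 1) → E) (e' : E) : ℝ :=
    if es ∈ T then (if e' = e then 1 else 0) - S.p e (S.codePoint xs es) else 0
  have hH : (pastWord n ⁻¹' T).indicator (fun σ => {σ : ℤ → E | σ 1 = e}.indicator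
      (fun _ => (1 : ℝ)) σ - S.p e (S.codeSeq xs σ n)) = fun σ => H (pastWord n σ) (σ 1) := by
    funext σ
    simp only [Set.indicator_apply, Set.mem_preimage, Set.mem_ofPred_eq, codeSeq_eq_codePoint, H]
  have hmean (es : Fin (n + 1) → E) (y : K) : ∑ e', S.p e' y * H es e' =
      if es ∈ T then S.p e y - S.p e (S.codePoint xs es) else 0 := by
    split_ifs with hes <;>
      simp [H, hes, mul_sub, Finset.sum_sub_distrib, ← Finset.sum_mul, S.p_sum_one]
  rw [hH, hM.integral_pastWord_next, ← Real.norm_eq_abs]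
  refine norm_integral_le_of_norm_le (integrable_codingError μ e n) (.of_forall fun x => ?_)
  refine (norm_sum_le _ _).trans (Finset.sum_le_sum fun es _ => ?_)
  rw [norm_mul, Real.norm_of_nonneg (cylWeight_nonneg x _), hmean]
  gcongr
  · exact cylWeight_nonneg x _
  · split_ifs
    · exact le_rfl
    · simp

variable {xs : Fin N → K}

lemma tendsto_setIntegral_p_codeSeq (hM : S.IsGMarkovMeasure μ M) {e : E}
    (hUC : UniformContinuousOn (S.p e) (S.Ks (S.ι e))) (hxs : ∀ i, xs i ∈ S.Ks i)
    {k : ℕ} {s : Set (ℤ → E)} (hs : MeasurableSet[pastFiltration E k] s) :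
    Tendsto (fun n => ∫ σ in s, S.p e (S.codeSeq xs σ n) ∂M) atTop
      (𝓝 (∫ σ in s, {σ : ℤ → E | σ 1 = e}.indicator (fun _ => (1 : ℝ)) σ ∂M)) := by
  refine tendsto_iff_dist_tendsto_zero.mpr (squeeze_zero' (.of_forall fun _ => dist_nonneg) ?_
    (tendsto_integral_codingError μ hUC hxs))
  filter_upwards [eventually_ge_atTop k] with n hn
  rw [dist_comm, Real.dist_eq, ← integral_sub (hM.integrable_indicator_next e).integrableOn
    (hM.integrable_p_codeSeq xs e n).integrableOn]
  exact hM.abs_setIntegral_indicator_sub_le xs e ((pastFiltration E).mono hn s hs)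

lemma ae_exists_tendsto_codeSeq [CompleteSpace K] (hM : S.IsGMarkovMeasure μ M)
    (hY : M (S.Yset xs) = 1) : ∀ᵐ σ ∂M, ∃ L, Tendsto (S.codeSeq xs σ) atTop (𝓝 L) := by
  have := hM.1
  have hnull : NullMeasurableSet {σ | ∃ L, Tendsto (S.codeSeq xs σ) atTop (𝓝 L)} M :=
    nullMeasurableSet_exists_tendsto fun n =>
      (hM.aestronglyMeasurable_codeSeq_comp xs id n).mono pastAlg_le
  refine (mem_ae_iff_prob_eq_one₀ hnull).mpr (le_antisymm prob_le_one ?_)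
  rw [← hY]
  refine measure_mono fun σ hσ => ?_
  obtain ⟨τ, hτ, rfl⟩ := Set.mem_iInter.mp hσ 0
  have hshift : shiftZ E 0 τ = τ := funext fun j => congrArg τ (add_zero j)
  exact hshift.symm ▸ hτ.2

end IsGMarkovMeasure

end CMS

theorem cms_condexp_eq_p_comp_F_general
    {K : Type*} [MetricSpace K] [MeasurableSpace K] [Nonempty K]
    {N : ℕ} {E : Type*} [Fintype E] [MeasurableSpace E] {S : CMS K N E}
    (hOpen : ∀ i, IsOpen (S.Ks i))
    {μ : Measure K} [IsProbabilityMeasure μ]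
    {M : Measure (ℤ → E)} (hM : S.IsGMarkovMeasure μ M)
    {xs : Fin N → K} (hxs : ∀ i, xs i ∈ S.Ks i)
    (hconv : ∀ᵐ σ ∂M, ∃ L, Tendsto (S.codeSeq xs σ) atTop (𝓝 L))
    {e : E} (hUC : UniformContinuousOn (S.p e) (S.Ks (S.ι e))) :
    (M[Set.indicator {σ : ℤ → E | σ 1 = e} (fun _ => (1 : ℝ)) | pastAlg E])
      =ᵐ[M] fun σ => S.p e (S.F xs σ) := by
  have := hM.1
  have hlim : ∀ᵐ σ ∂M, Tendsto (fun n => S.p e (S.codeSeq xs σ n)) atTop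
      (𝓝 (S.p e (S.F xs σ))) := by
    filter_upwards [hconv] with σ hσ
    exact ((CMS.continuous_p hOpen hUC.continuousOn).tendsto _).comp (tendsto_nhds_limUnder hσ)
  have hmeas : AEStronglyMeasurable[pastAlg E] (fun σ => S.p e (S.F xs σ)) M :=
    aestronglyMeasurable_subalgebra_of_tendsto_ae
      (hM.aestronglyMeasurable_codeSeq_comp xs (S.p e)) hlim
  have h_int : Integrable (fun σ => S.p e (S.F xs σ)) M :=
    .of_bound (hmeas.mono pastAlg_le) 1 (.of_forall fun _ => CMS.norm_p_le_one e _)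
  refine EventuallyEq.trans ?_ (condExp_of_aestronglyMeasurable' pastAlg_le hmeas h_int)
  rw [← iSup_pastFiltration]
  refine condExp_iSup_ae_eq_of_forall_setIntegral_eq (hM.integrable_indicator_next e) h_int
    fun k s hs => tendsto_nhds_unique (hM.tendsto_setIntegral_p_codeSeq hUC hxs hs) ?_
  exact tendsto_integral_of_dominated_convergence (fun _ => (1 : ℝ))
    (fun n => (hM.integrable_p_codeSeq xs e n).aestronglyMeasurable.restrict) (integrable_const 1)
    (fun n => .of_forall fun _ => CMS.norm_p_le_one e _) (ae_restrict_of_ae hlim)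

-- stmt 14
theorem cms_condexp_eq_p_comp_F
    {K : Type*} [MetricSpace K] [MeasurableSpace K] [BorelSpace K] [Nonempty K]
    {N : ℕ} {E : Type*} [Fintype E] [MeasurableSpace E] (S : CMS K N E)
    (hProper : ∀ A : Set K, Bornology.IsBounded A → IsCompact (closure A))
    (hOpen : ∀ i, IsOpen (S.Ks i))
    (hUC : ∀ e, UniformContinuousOn (S.p e) (S.Ks (S.ι e)))
    (δ : ℝ) (hδ : 0 < δ) (hp : ∀ e, ∀ x ∈ S.Ks (S.ι e), δ ≤ S.p e x)
    (μ : Measure K) (hμ : IsProbabilityMeasure μ) (hinv : S.adjoint μ = μ)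
    (M : Measure (ℤ → E)) (hM : S.IsGMarkovMeasure μ M)
    (xs : Fin N → K) (hxs : ∀ i, xs i ∈ S.Ks i)
    (hmom : ∑ i, ∫⁻ x in S.Ks i, ENNReal.ofReal (dist x (xs i)) ∂μ < ⊤)
    (hY : M (S.Yset xs) = 1) :
    ∀ e : E,
      (M[Set.indicator {σ : ℤ → E | σ 1 = e} (fun _ => (1 : ℝ)) | pastAlg E])
        =ᵐ[M] fun σ => S.p e (S.F xs σ) := by
  have : ProperSpace K := ⟨fun x r => by
    simpa only [Metric.isClosed_closedBall.closure_eq] using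
      hProper (Metric.closedBall x r) Metric.isBounded_closedBall⟩
  exact fun e => cms_condexp_eq_p_comp_F_general hOpen hM hxs (hM.ae_exists_tendsto_codeSeq hY)
    (hUC e)
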